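/- arXiv:1603.00045 — 2 statements merged into one kernel-verified Lean document; each statement's English description precedes it below -/
import Mathlib

section
/- Let R be a commutative noetherian ring and T a multiplicatively closed subset of R. If k ≥ 0 is an integer such that \overline{J}^n ⊆ J^{n−k} for every ideal J of R and every n ≥ k, then \overline{K}^n ⊆ K^{n−k} for every ideal K of T^{-1}R and every n ≥ k; consequently i(T^{-1}R) ≤ i(R). -/
/-!
Every ideal `K` of `T⁻¹R` is extended from its contraction `J = K ∩ R`, and extension of ideals
commutes with powers. So it is enough that `\overline K` is contained in the extension of
`\overline J` (`intClosure_le_map`): then `\overline K ^ n` lies in the extension of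
`\overline J ^ n ⊆ J ^ (n - k)`, which is `K ^ (n - k)`.

For that containment, take an integral equation of `y` over `K` and scale it by a common
denominator of `y` and of the coefficients. It becomes the image of an integral expression over `J`
which vanishes in `T⁻¹R`, hence is killed by some `u ∈ T`; scaling once more by `u` makes it an
honest integral equation over `J` in `R`.
-/

/-- An element `x` is integral over the ideal `J`: it satisfies an equation
`x ^ n + a 1 * x ^ (n - 1) + ⋯ + a n = 0` with `a i ∈ J ^ i` for `1 ≤ i ≤ n`. -/
def IsIntegralOverIdeal {R : Type*} [CommRing R] (J : Ideal R) (x : R) : Prop :=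
  ∃ n : ℕ, 0 < n ∧ ∃ a : ℕ → R, (∀ i, 1 ≤ i → i ≤ n → a i ∈ J ^ i) ∧
    x ^ n + ∑ i ∈ Finset.Icc 1 n, a i * x ^ (n - i) = 0

/-- The integral closure `\overline J` of an ideal `J`: the ideal of all elements integral
over `J` (realized as the ideal generated by this set, which is in fact already an ideal). -/
def Ideal.intClosure {R : Type*} [CommRing R] (J : Ideal R) : Ideal R :=
  Ideal.span {x | IsIntegralOverIdeal J x}

/-- `IntDimBound R k` : `\overline J ^ n ⊆ J ^ (n - k)` for every ideal `J` of `R` and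
every `n ≥ k`. -/
def IntDimBound (R : Type*) [CommRing R] (k : ℕ) : Prop :=
  ∀ (J : Ideal R) (n : ℕ), k ≤ n → (Ideal.intClosure J) ^ n ≤ J ^ (n - k)

/-- The integral dimension `i(R)` : the least integer `k ≥ 0` such that
`\overline J ^ n ⊆ J ^ (n - k)` for every ideal `J` of `R` and every `n ≥ k`,
and `∞` if no such `k` exists. -/
noncomputable def integralDimension (R : Type*) [CommRing R] : ℕ∞ :=
  sInf {k : ℕ∞ | ∃ k0 : ℕ, k = k0 ∧ IntDimBound R k0}

/-- Homogeneity of integral expressions: replacing `x` by `d * x` and each coefficient `a i` by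
`d ^ i * a i` multiplies the whole expression by `d ^ n`. -/
lemma integralExpr_scale {R : Type*} [CommRing R] (d x : R) (a : ℕ → R) (n : ℕ) :
    (d * x) ^ n + ∑ i ∈ Finset.Icc 1 n, (d ^ i * a i) * (d * x) ^ (n - i) =
      d ^ n * (x ^ n + ∑ i ∈ Finset.Icc 1 n, a i * x ^ (n - i)) := by
  rw [mul_add, mul_pow, Finset.mul_sum]
  congr 1
  refine Finset.sum_congr rfl fun i hi => ?_
  rw [mul_pow, ← Nat.add_sub_of_le (Finset.mem_Icc.mp hi).2, pow_add, Nat.add_sub_cancel_left]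
  ring

/-- The coefficients of an integral equation over an extended ideal have a common denominator
in `T`, with numerators in the corresponding powers of `J`. -/
lemma exists_common_denominator {R : Type*} [CommRing R] (T : Submonoid R) (J : Ideal R) (n : ℕ)
    (a : ℕ → Localization T)
    (ha : ∀ i, 1 ≤ i → i ≤ n → a i ∈ (J.map (algebraMap R (Localization T))) ^ i) :
    ∃ s ∈ T, ∃ b : ℕ → R, ∀ i, 1 ≤ i → i ≤ n →
      b i ∈ J ^ i ∧ algebraMap R (Localization T) (b i) = algebraMap R _ s * a i := by
  classical
  have h : ∀ i, ∃ s ∈ T, 1 ≤ i → i ≤ n →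
      ∃ b ∈ J ^ i, algebraMap R (Localization T) b = algebraMap R _ s * a i := by
    intro i
    by_cases hi : 1 ≤ i ∧ i ≤ n
    · have hm := ha i hi.1 hi.2
      rw [← Ideal.map_pow, IsLocalization.mem_map_algebraMap_iff T] at hm
      obtain ⟨⟨b, s⟩, hbs⟩ := hm
      exact ⟨s, s.2, fun _ _ => ⟨b, b.2, by rw [mul_comm]; exact hbs.symm⟩⟩
    · exact ⟨1, T.one_mem, fun h1 h2 => absurd ⟨h1, h2⟩ hi⟩
  choose s hs hb using h
  have h' : ∀ i, ∃ b, 1 ≤ i → i ≤ n → b ∈ J ^ i ∧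
      algebraMap R (Localization T) b = algebraMap R _ (∏ j ∈ Finset.Icc 1 n, s j) * a i := by
    intro i
    by_cases hi : 1 ≤ i ∧ i ≤ n
    · obtain ⟨b, hbJ, hbe⟩ := hb i hi.1 hi.2
      refine ⟨(∏ j ∈ (Finset.Icc 1 n).erase i, s j) * b,
        fun _ _ => ⟨Ideal.mul_mem_left _ _ hbJ, ?_⟩⟩
      rw [map_mul, hbe, ← Finset.prod_erase_mul _ _ (Finset.mem_Icc.mpr hi), map_mul, mul_assoc]
    · exact ⟨0, fun h1 h2 => absurd ⟨h1, h2⟩ hi⟩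
  choose b hb' using h'
  exact ⟨_, T.prod_mem fun i _ => hs i, b, hb'⟩

lemma intClosure_le_map {R : Type*} [CommRing R] (T : Submonoid R) (J : Ideal R) :
    Ideal.intClosure (J.map (algebraMap R (Localization T))) ≤
      (Ideal.intClosure J).map (algebraMap R (Localization T)) := by
  refine Ideal.span_le.mpr ?_
  rintro y ⟨n, hn, a, ha, hy⟩
  obtain ⟨s, hs, b, hb⟩ := exists_common_denominator T J n a ha
  obtain ⟨⟨x, t⟩, hxt⟩ := IsLocalization.surj T y
  dsimp only at hxt
  -- `c i` is the numerator of `(s * t) ^ i * a i`; only `i ≥ 1` matters, so `i - 1` is harmless.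
  let c : ℕ → R := fun i => (s * t) ^ (i - 1) * t * b i
  have hc : ∀ i, 1 ≤ i → i ≤ n → c i ∈ J ^ i := fun i h1 h2 =>
    Ideal.mul_mem_left _ _ (hb i h1 h2).1
  have hce : ∀ i, 1 ≤ i → i ≤ n →
      algebraMap R (Localization T) (c i) = algebraMap R _ (s * t) ^ i * a i := by
    intro i h1 h2
    obtain ⟨j, rfl⟩ := Nat.exists_eq_add_of_le' h1
    simp only [c, map_mul, map_pow, (hb _ h1 h2).2, Nat.add_sub_cancel]
    ring
  have hxe : algebraMap R (Localization T) (s * x) = algebraMap R _ (s * t) * y := by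
    rw [map_mul, map_mul, ← hxt]; ring
  have h0 : algebraMap R (Localization T)
      ((s * x) ^ n + ∑ i ∈ Finset.Icc 1 n, c i * (s * x) ^ (n - i)) = 0 := by
    rw [← mul_zero (algebraMap R (Localization T) (s * t) ^ n), ← hy, ← integralExpr_scale,
      map_add, map_pow, map_sum, hxe]
    congr 1
    refine Finset.sum_congr rfl fun i hi => ?_
    rw [Finset.mem_Icc] at hi
    rw [map_mul, map_pow, hxe, hce i hi.1 hi.2]
  obtain ⟨u, hu⟩ := (IsLocalization.map_eq_zero_iff T (Localization T) _).mp h0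
  have hJint : IsIntegralOverIdeal J (u * (s * x)) := by
    refine ⟨n, hn, fun i => u ^ i * c i, fun i h1 h2 => Ideal.mul_mem_left _ _ (hc i h1 h2), ?_⟩
    obtain ⟨m, rfl⟩ := Nat.exists_eq_add_of_le' hn
    rw [integralExpr_scale, pow_succ, mul_assoc, hu, mul_zero]
  rw [SetLike.mem_coe, IsLocalization.mem_map_algebraMap_iff T]
  refine ⟨⟨⟨u * (s * x), Ideal.subset_span hJint⟩, u * (⟨s, hs⟩ * t)⟩, ?_⟩
  simp only [Submonoid.coe_mul, map_mul, ← hxt]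
  ring

lemma IntDimBound.localization {R : Type*} [CommRing R] (T : Submonoid R) {k : ℕ}
    (h : IntDimBound R k) : IntDimBound (Localization T) k := by
  intro K n hkn
  obtain ⟨J, rfl⟩ : ∃ J : Ideal R, J.map (algebraMap R (Localization T)) = K :=
    ⟨_, IsLocalization.map_under T (Localization T) K⟩
  calc _ ≤ ((Ideal.intClosure J).map (algebraMap R (Localization T))) ^ n :=
        Ideal.pow_right_mono (intClosure_le_map T J) n
    _ = ((Ideal.intClosure J) ^ n).map (algebraMap R (Localization T)) :=
        (Ideal.map_pow _ _ _).symm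
    _ ≤ (J ^ (n - k)).map (algebraMap R (Localization T)) := Ideal.map_mono (h J n hkn)
    _ = _ := Ideal.map_pow _ _ _

/-- If `k ≥ 0` satisfies `\overline J ^ n ⊆ J ^ (n - k)` for every ideal `J` of a noetherian
ring `R` and every `n ≥ k`, then the same bound holds for every ideal of the localization
`T⁻¹R`; consequently `i(T⁻¹R) ≤ i(R)`. -/
theorem intDimBound_localization {R : Type*} [CommRing R] [IsNoetherianRing R]
    (T : Submonoid R) :
    (∀ k : ℕ, IntDimBound R k → IntDimBound (Localization T) k) ∧
      integralDimension (Localization T) ≤ integralDimension R := by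
  refine ⟨fun k h => h.localization T, sInf_le_sInf ?_⟩
  rintro _ ⟨k, rfl, h⟩
  exact ⟨k, rfl, h.localization T⟩
end

section
/- Let φ : R → S be a faithfully flat ring homomorphism of commutative noetherian rings. If k ≥ 0 is an integer such that \overline{K}^n ⊆ K^{n−k} for every ideal K of S and every n ≥ k, then \overline{J}^n ⊆ J^{n−k} for every ideal J of R and every n ≥ k; consequently i(R) ≤ i(S). -/
theorem IsIntegralOverIdeal.map {R S : Type*} [CommRing R] [CommRing S] (f : R →+* S)
    {J : Ideal R} {x : R} (hx : IsIntegralOverIdeal J x) :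
    IsIntegralOverIdeal (J.map f) (f x) := by
  obtain ⟨n, hn, a, ha, h⟩ := hx
  refine ⟨n, hn, fun i => f (a i), fun i h1 h2 => ?_, ?_⟩
  · rw [← Ideal.map_pow]
    exact Ideal.mem_map_of_mem f (ha i h1 h2)
  · simpa using congrArg f h

theorem Ideal.map_intClosure_le {R S : Type*} [CommRing R] [CommRing S] (f : R →+* S)
    (J : Ideal R) : (Ideal.intClosure J).map f ≤ Ideal.intClosure (J.map f) := by
  rw [Ideal.map_le_iff_le_comap]
  exact Ideal.span_le.mpr fun x hx => Ideal.subset_span (IsIntegralOverIdeal.map f hx)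

theorem IntDimBound.of_faithfullyFlat {R S : Type*} [CommRing R] [CommRing S]
    [Algebra R S] [Module.FaithfullyFlat R S] {k : ℕ} (h : IntDimBound S k) :
    IntDimBound R k := by
  intro J n hn
  rw [← Ideal.comap_map_eq_self_of_faithfullyFlat (B := S) (J ^ (n - k)),
    ← Ideal.map_le_iff_le_comap, Ideal.map_pow, Ideal.map_pow]
  exact (Ideal.pow_right_mono (Ideal.map_intClosure_le _ J) n).trans (h _ n hn)

/-- Let `R → S` be a faithfully flat homomorphism of commutative noetherian rings. If `k ≥ 0`
satisfies `\overline K ^ n ⊆ K ^ (n - k)` for every ideal `K` of `S` and every `n ≥ k`, then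
`\overline J ^ n ⊆ J ^ (n - k)` for every ideal `J` of `R` and every `n ≥ k`; consequently
`i(R) ≤ i(S)`. -/
theorem intDimBound_of_faithfullyFlat {R S : Type*} [CommRing R] [CommRing S]
    [IsNoetherianRing R] [IsNoetherianRing S] [Algebra R S] [Module.FaithfullyFlat R S] :
    (∀ k : ℕ, IntDimBound S k → IntDimBound R k) ∧
      integralDimension R ≤ integralDimension S := by
  refine ⟨fun k h => h.of_faithfullyFlat, sInf_le_sInf ?_⟩
  rintro _ ⟨k, rfl, h⟩
  exact ⟨k, rfl, h.of_faithfullyFlat⟩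
end
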